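/- Let a' , b > 0 be fixed. As a' → ∞, the real beta-hypergeometric distributions μ_{a,a',b} converge weakly to the Beta distribution of the first kind β¹_{a,b}; and as b → ∞ with a' < a, μ_{a,a',b} converges weakly to β¹_{a−a',a'}. -/

import Mathlib

open MeasureTheory ProbabilityTheory Real Set Filter Topology

noncomputable def gammaDens (p σ y : ℝ) : ℝ :=
  if 0 < y then σ ^ p / Real.Gamma p * Real.exp (-(σ * y)) * y ^ (p - 1) else 0

noncomputable def gammaM (p σ : ℝ) : Measure ℝ :=
  MeasureTheory.volume.withDensity fun y => ENNReal.ofReal (gammaDens p σ y)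

noncomputable def beta1Dens (p q x : ℝ) : ℝ :=
  if 0 < x ∧ x < 1 then
    Real.Gamma (p + q) / (Real.Gamma p * Real.Gamma q) * x ^ (p - 1) * (1 - x) ^ (q - 1)
  else 0

noncomputable def beta1 (p q : ℝ) : Measure ℝ :=
  MeasureTheory.volume.withDensity fun x => ENNReal.ofReal (beta1Dens p q x)

noncomputable def beta2Dens (p q y : ℝ) : ℝ :=
  if 0 < y then
    Real.Gamma (p + q) / (Real.Gamma p * Real.Gamma q) * y ^ (p - 1) * (1 + y) ^ (-(p + q))
  else 0

noncomputable def beta2 (p q : ℝ) : Measure ℝ :=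
  MeasureTheory.volume.withDensity fun y => ENNReal.ofReal (beta2Dens p q y)

/-- Pochhammer (rising factorial) symbol `(a)_n`. -/
noncomputable def poch (a : ℝ) (n : ℕ) : ℝ := ∏ i ∈ Finset.range n, (a + (i : ℝ))

/-- Gauss hypergeometric function `₂F₁(a,b;c;x)`. -/
noncomputable def F21 (a b c x : ℝ) : ℝ :=
  ∑' n : ℕ, poch a n * poch b n / ((n.factorial : ℝ) * poch c n) * x ^ n

/-- Generalized hypergeometric `₃F₂(a₁,a₂,a₃;b₁,b₂;1)` at unit argument. -/
noncomputable def F32one (a1 a2 a3 b1 b2 : ℝ) : ℝ :=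
  ∑' n : ℕ, poch a1 n * poch a2 n * poch a3 n /
    ((n.factorial : ℝ) * poch b1 n * poch b2 n)

/-- Normalizing constant of the real beta-hypergeometric distribution. -/
noncomputable def Cbh (a a' b : ℝ) : ℝ :=
  Real.Gamma (a + b) / (Real.Gamma a * Real.Gamma b * F32one a a b (a + b) (a + a'))

noncomputable def bhDens (a a' b x : ℝ) : ℝ :=
  if 0 < x ∧ x < 1 then
    Cbh a a' b * x ^ (a - 1) * (1 - x) ^ (b - 1) * F21 a b (a + a') x
  else 0

/-- The real beta-hypergeometric distribution `μ_{a,a',b}`. -/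
noncomputable def bhMeasure (a a' b : ℝ) : Measure ℝ :=
  MeasureTheory.volume.withDensity fun x => ENNReal.ofReal (bhDens a a' b x)


lemma poch_pos {a : ℝ} (ha : 0 < a) (n : ℕ) : 0 < poch a n :=
  Finset.prod_pos fun i _ => by positivity

lemma poch_Gamma {a : ℝ} (ha : 0 < a) (n : ℕ) : Real.Gamma (a + n) = poch a n * Real.Gamma a := by
  induction n with
  | zero => simp [poch]
  | succ k ih =>
    have h : a + ((k + 1 : ℕ) : ℝ) = (a + k) + 1 := by push_cast; ring
    have h0 : a + (k : ℝ) ≠ 0 := by positivity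
    rw [h, Real.Gamma_add_one h0, ih, poch, poch, Finset.prod_range_succ]
    ring

lemma beta_shift {p q : ℝ} (hp : 0 < p) (hq : 0 < q) (n : ℕ) :
    ProbabilityTheory.beta (p + n) q = ProbabilityTheory.beta p q * (poch p n / poch (p + q) n) := by
  have h : p + (n : ℝ) + q = (p + q) + n := by ring
  have hpq : 0 < p + q := by positivity
  have h1 := (poch_pos hpq n).ne'
  have h2 := (Real.Gamma_pos_of_pos hpq).ne'
  unfold ProbabilityTheory.beta
  rw [h, poch_Gamma hp, poch_Gamma hpq]
  field_simp

lemma lint_beta {p q : ℝ} (hp : 0 < p) (hq : 0 < q) :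
    ∫⁻ x in Ioo (0:ℝ) 1, ENNReal.ofReal (x ^ (p - 1) * (1 - x) ^ (q - 1))
      = ENNReal.ofReal (ProbabilityTheory.beta p q) := by
  have hB := ProbabilityTheory.beta_pos hp hq
  have h := ProbabilityTheory.lintegral_betaPDF_eq_one hp hq
  rw [ProbabilityTheory.lintegral_betaPDF] at h
  have h2 : ∫⁻ x in Ioo (0:ℝ) 1, ENNReal.ofReal (x ^ (p - 1) * (1 - x) ^ (q - 1))
      = ∫⁻ x in Ioo (0:ℝ) 1, ENNReal.ofReal (ProbabilityTheory.beta p q) *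
        ENNReal.ofReal (1 / ProbabilityTheory.beta p q * x ^ (p - 1) * (1 - x) ^ (q - 1)) := by
    refine lintegral_congr fun x => ?_
    rw [← ENNReal.ofReal_mul hB.le]
    congr 1
    field_simp
  rw [h2, lintegral_const_mul _ (by fun_prop), h, mul_one]

lemma choose_poch (b : ℝ) (n : ℕ) : Ring.choose (b + n - 1) n = poch b n / n.factorial := by
  have h := Ring.factorial_nsmul_multichoose_eq_ascPochhammer b n
  have h3 : Polynomial.smeval (ascPochhammer ℕ n) b = poch b n := by
    rw [Polynomial.ascPochhammer_smeval_eq_eval]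
    clear h
    induction n with
    | zero => simp [poch]
    | succ k ih => 
      rw [ascPochhammer_succ_right, poch, Finset.prod_range_succ, ← poch, ← ih]
      simp
  rw [h3, nsmul_eq_mul] at h
  have h4 : Ring.choose (b + n - 1) n = Ring.multichoose b n := by
    rw [Ring.choose]; congr 1; ring
  rw [h4, ← h]
  field_simp

lemma binom_hasSum (b : ℝ) {y : ℝ} (hy : |y| < 1) :
    HasSum (fun n : ℕ => poch b n / n.factorial * y ^ n) ((1 - y) ^ (-b)) := by
  have h := (Real.one_div_one_sub_rpow_hasFPowerSeriesOnBall_zero b).hasSum (y := y)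
    (by
      rw [Metric.mem_eball, edist_zero_right, ← ofReal_norm, Real.norm_eq_abs, ENNReal.ofReal_lt_one]
      exact hy)
  have h1 : (0:ℝ) ≤ 1 - y := by have := abs_lt.1 hy; linarith
  rw [Real.rpow_neg h1]
  simpa [FormalMultilinearSeries.ofScalars, choose_poch] using h

/-- series coefficient -/
noncomputable def cf (a b c : ℝ) (n : ℕ) : ℝ := poch a n * poch b n / ((n.factorial : ℝ) * poch c n)

lemma cf_nonneg {a b c : ℝ} (ha : 0 < a) (hb : 0 < b) (hc : 0 < c) (n : ℕ) : 0 ≤ cf a b c n := by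
  have := poch_pos ha n
  have := poch_pos hb n
  have := poch_pos hc n
  unfold cf; positivity

lemma poch_mono {a c : ℝ} (ha : 0 < a) (hc : a ≤ c) (n : ℕ) : poch a n ≤ poch c n :=
  Finset.prod_le_prod (fun i _ => by positivity) fun i _ => by linarith

lemma cf_le {a b c : ℝ} (ha : 0 < a) (hb : 0 < b) (hc : a ≤ c) (n : ℕ) :
    cf a b c n ≤ poch b n / n.factorial := by
  have h1 := poch_pos ha n
  have h2 := poch_pos hb n
  have h3 := poch_pos (ha.trans_le hc) n
  have h4 := poch_mono ha hc n
  have h5 : (0:ℝ) < n.factorial := by positivity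
  unfold cf
  rw [div_le_div_iff₀ (by positivity) h5]
  have := mul_le_mul_of_nonneg_left h4 (mul_pos h2 h5).le
  nlinarith

lemma F21_summable {a b c x : ℝ} (ha : 0 < a) (hb : 0 < b) (hc : a ≤ c) (hx : x ∈ Ioo (0:ℝ) 1) :
    Summable (fun n => cf a b c n * x ^ n) := by
  have hx0 : 0 < x := hx.1
  refine Summable.of_nonneg_of_le (fun n => ?_) (fun n => ?_)
    (binom_hasSum b (y := x) (by rw [abs_of_pos hx.1]; exact hx.2)).summable
  · have := cf_nonneg ha hb (ha.trans_le hc) n; positivity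
  · have := cf_le ha hb hc n; gcongr

/-- extended-nonnegative version of `F21` -/
noncomputable def E21 (a b c x : ℝ) : ENNReal := ∑' n : ℕ, ENNReal.ofReal (cf a b c n * x ^ n)

lemma E21_eq {a b c x : ℝ} (ha : 0 < a) (hb : 0 < b) (hc : a ≤ c) (hx : x ∈ Ioo (0:ℝ) 1) :
    ENNReal.ofReal (F21 a b c x) = E21 a b c x := by
  have hx0 : 0 < x := hx.1
  rw [E21, ← ENNReal.ofReal_tsum_of_nonneg _ (F21_summable ha hb hc hx)]
  · rfl
  · intro n
    have := cf_nonneg ha hb (ha.trans_le hc) n; positivity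

@[fun_prop]
lemma E21_meas (a b c : ℝ) : Measurable (E21 a b c) := by
  unfold E21
  exact Measurable.tsum fun n => by fun_prop

/-- Euler integral -/
lemma euler {a a' b x : ℝ} (ha : 0 < a) (ha' : 0 < a') (hb : 0 < b) (hx : x ∈ Ioo (0:ℝ) 1) :
    ENNReal.ofReal (ProbabilityTheory.beta a a') * E21 a b (a + a') x
      = ∫⁻ t in Ioo (0:ℝ) 1, ENNReal.ofReal (t ^ (a - 1) * (1 - t) ^ (a' - 1) * (1 - x * t) ^ (-b)) := by
  have hx0 : 0 < x := hx.1
  have hB := ProbabilityTheory.beta_pos ha ha'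
  have h1 : ∫⁻ t in Ioo (0:ℝ) 1, ENNReal.ofReal (t ^ (a - 1) * (1 - t) ^ (a' - 1) * (1 - x * t) ^ (-b))
      = ∫⁻ t in Ioo (0:ℝ) 1, ∑' n : ℕ, ENNReal.ofReal (poch b n / n.factorial * x ^ n) *
        ENNReal.ofReal (t ^ (a + n - 1) * (1 - t) ^ (a' - 1)) := by
    refine setLIntegral_congr_fun measurableSet_Ioo fun t ht => ?_
    have ht0 : 0 < t := ht.1
    have ht1 : 0 < 1 - t := by linarith [ht.2]
    have hxt : |x * t| < 1 := by
      rw [abs_of_pos (by positivity)]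
      have := hx.2; have := ht.2
      nlinarith
    have hs := (binom_hasSum b hxt).mul_left (t ^ (a - 1) * (1 - t) ^ (a' - 1))
    have hnn : ∀ n : ℕ, 0 ≤ t ^ (a - 1) * (1 - t) ^ (a' - 1) * (poch b n / n.factorial * (x * t) ^ n) := by
      intro n
      have := poch_pos hb n
      positivity
    beta_reduce
    rw [← hs.tsum_eq, ENNReal.ofReal_tsum_of_nonneg hnn hs.summable]
    refine tsum_congr fun n => ?_
    have := poch_pos hb n
    rw [← ENNReal.ofReal_mul (by positivity)]
    congr 1
    have : t ^ (a + n - 1) = t ^ (a - 1) * t ^ n := by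
      rw [← Real.rpow_natCast, ← Real.rpow_add ht0]; congr 1; ring
    rw [this, mul_pow]; ring
  rw [h1, lintegral_tsum (fun n => by fun_prop), E21, ← ENNReal.tsum_mul_left]
  refine tsum_congr fun n => ?_
  have := poch_pos hb n
  rw [lintegral_const_mul _ (by fun_prop), lint_beta (by positivity) ha', beta_shift ha ha',
    ← ENNReal.ofReal_mul hB.le, ← ENNReal.ofReal_mul (by positivity)]
  congr 1
  unfold cf
  have := poch_pos (add_pos ha ha') n
  field_simp

/-- unnormalised functional -/
noncomputable def U (a a' b : ℝ) (φ : ℝ → ENNReal) : ENNReal :=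
  ∫⁻ x in Ioo (0:ℝ) 1, φ x * (ENNReal.ofReal (x ^ (a - 1) * (1 - x) ^ (b - 1)) * E21 a b (a + a') x)

lemma U_one {a a' b : ℝ} (ha : 0 < a) (ha' : 0 < a') (hb : 0 < b) :
    U a a' b (fun _ => 1) = ENNReal.ofReal (ProbabilityTheory.beta a b) *
      ∑' n : ℕ, ENNReal.ofReal (poch a n * poch a n * poch b n /
        ((n.factorial : ℝ) * poch (a + b) n * poch (a + a') n)) := by
  have hB := ProbabilityTheory.beta_pos ha hb
  have h1 : U a a' b (fun _ => 1) = ∫⁻ t in Ioo (0:ℝ) 1, ∑' n : ℕ, ENNReal.ofReal (cf a b (a + a') n) *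
        ENNReal.ofReal (t ^ (a + n - 1) * (1 - t) ^ (b - 1)) := by
    refine setLIntegral_congr_fun measurableSet_Ioo fun t ht => ?_
    have ht0 : 0 < t := ht.1
    have ht1 : 0 < 1 - t := by linarith [ht.2]
    beta_reduce
    rw [E21, one_mul, ← ENNReal.tsum_mul_left]
    refine tsum_congr fun n => ?_
    rw [← ENNReal.ofReal_mul (by positivity), ← ENNReal.ofReal_mul (cf_nonneg ha hb (by positivity) n)]
    congr 1
    have : t ^ (a + n - 1) = t ^ (a - 1) * t ^ n := by
      rw [← Real.rpow_natCast, ← Real.rpow_add ht0]; congr 1; ring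
    rw [this]; ring
  rw [h1, lintegral_tsum (fun n => by fun_prop), ← ENNReal.tsum_mul_left]
  refine tsum_congr fun n => ?_
  rw [lintegral_const_mul _ (by fun_prop), lint_beta (by positivity) hb, beta_shift ha hb,
    ← ENNReal.ofReal_mul hB.le, ← ENNReal.ofReal_mul (cf_nonneg ha hb (by positivity) n)]
  congr 1
  unfold cf
  have := poch_pos (add_pos ha ha') n
  have := poch_pos (add_pos ha hb) n
  field_simp

lemma Cbh_eq {a a' b : ℝ} (ha : 0 < a) (ha' : 0 < a') (hb : 0 < b) (h : U a a' b (fun _ => 1) ≠ ⊤) :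
    0 < Cbh a a' b ∧ U a a' b (fun _ => 1) ≠ 0 ∧
      ENNReal.ofReal (Cbh a a' b) = (U a a' b (fun _ => 1))⁻¹ := by
  have hB := ProbabilityTheory.beta_pos ha hb
  rw [U_one ha ha' hb] at h ⊢
  have hnn : ∀ n : ℕ, 0 ≤ poch a n * poch a n * poch b n /
        ((n.factorial : ℝ) * poch (a + b) n * poch (a + a') n) := by
    intro n
    have := poch_pos (add_pos ha ha') n
    have := poch_pos (add_pos ha hb) n
    have := poch_pos ha n
    have := poch_pos hb n
    positivity
  have hs : Summable fun n : ℕ => poch a n * poch a n * poch b n /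
        ((n.factorial : ℝ) * poch (a + b) n * poch (a + a') n) := by
    have h2 : (∑' n : ℕ, ENNReal.ofReal (poch a n * poch a n * poch b n /
        ((n.factorial : ℝ) * poch (a + b) n * poch (a + a') n))) ≠ ⊤ := by
      intro h3
      rw [h3] at h
      exact h (ENNReal.mul_top (by simpa using hB))
    have h3 := ENNReal.summable_toReal h2
    refine h3.congr fun n => ?_
    rw [ENNReal.toReal_ofReal (hnn n)]
  have hF : 0 < F32one a a b (a + b) (a + a') := by
    refine hs.tsum_pos hnn 0 ?_
    simp [poch]
  have hC : Cbh a a' b = (ProbabilityTheory.beta a b * F32one a a b (a + b) (a + a'))⁻¹ := by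
    have := Real.Gamma_pos_of_pos ha
    have := Real.Gamma_pos_of_pos hb
    have := Real.Gamma_pos_of_pos (add_pos ha hb)
    unfold Cbh ProbabilityTheory.beta
    field_simp
  rw [← ENNReal.ofReal_tsum_of_nonneg hnn hs, ← F32one, ← ENNReal.ofReal_mul hB.le, hC]
  refine ⟨by positivity, ?_, ENNReal.ofReal_inv_of_pos (by positivity)⟩
  rw [Ne, ENNReal.ofReal_eq_zero, not_le]
  positivity

lemma bh_lint {a a' b : ℝ} (ha : 0 < a) (ha' : 0 < a') (hb : 0 < b) (h : U a a' b (fun _ => 1) ≠ ⊤)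
    {φ : ℝ → ENNReal} (hφ : Measurable φ) :
    ∫⁻ x, φ x ∂(bhMeasure a a' b) = U a a' b φ / U a a' b (fun _ => 1) := by
  obtain ⟨hC, -, hC2⟩ := Cbh_eq ha ha' hb h
  have hd : (fun x => ENNReal.ofReal (bhDens a a' b x)) = (Ioo (0:ℝ) 1).indicator (fun x =>
      ENNReal.ofReal (Cbh a a' b) * (ENNReal.ofReal (x ^ (a - 1) * (1 - x) ^ (b - 1)) * E21 a b (a + a') x)) := by
    funext x
    by_cases hx : x ∈ Ioo (0:ℝ) 1
    · have h0 : 0 < x := hx.1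
      have h1 : 0 < 1 - x := by linarith [hx.2]
      rw [indicator_of_mem hx, bhDens, if_pos (show 0 < x ∧ x < 1 from hx), ← E21_eq ha hb (by linarith) hx,
        ← ENNReal.ofReal_mul (by positivity), ← ENNReal.ofReal_mul hC.le]
      congr 1; ring
    · rw [indicator_of_notMem hx, bhDens, if_neg (show ¬ (0 < x ∧ x < 1) from hx), ENNReal.ofReal_zero]
  rw [bhMeasure, hd, lintegral_withDensity_eq_lintegral_mul _
    (Measurable.indicator (by fun_prop) measurableSet_Ioo) hφ, div_eq_mul_inv, ← hC2, U,
    ← lintegral_mul_const _ (by fun_prop), ← lintegral_indicator measurableSet_Ioo]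
  refine lintegral_congr fun x => ?_
  by_cases hx : x ∈ Ioo (0:ℝ) 1
  · simp only [Pi.mul_apply, indicator_of_mem hx]; ring
  · simp only [Pi.mul_apply, indicator_of_notMem hx, zero_mul]

lemma beta1_lint {p q : ℝ} (hp : 0 < p) (hq : 0 < q) {φ : ℝ → ENNReal} (hφ : Measurable φ) :
    ∫⁻ x, φ x ∂(beta1 p q) = (∫⁻ x in Ioo (0:ℝ) 1, φ x * ENNReal.ofReal (x ^ (p - 1) * (1 - x) ^ (q - 1)))
      / ENNReal.ofReal (ProbabilityTheory.beta p q) := by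
  have hB := ProbabilityTheory.beta_pos hp hq
  have hd : (fun x => ENNReal.ofReal (beta1Dens p q x)) = (Ioo (0:ℝ) 1).indicator (fun x =>
      ENNReal.ofReal (ProbabilityTheory.beta p q)⁻¹ * (ENNReal.ofReal (x ^ (p - 1) * (1 - x) ^ (q - 1)))) := by
    funext x
    by_cases hx : x ∈ Ioo (0:ℝ) 1
    · rw [indicator_of_mem hx, beta1Dens, if_pos (show 0 < x ∧ x < 1 from hx), ← ENNReal.ofReal_mul (by positivity)]
      congr 1
      unfold ProbabilityTheory.beta
      rw [inv_div]; ring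
    · rw [indicator_of_notMem hx, beta1Dens, if_neg (show ¬ (0 < x ∧ x < 1) from hx), ENNReal.ofReal_zero]
  rw [beta1, hd, lintegral_withDensity_eq_lintegral_mul _
    (Measurable.indicator (by fun_prop) measurableSet_Ioo) hφ, div_eq_mul_inv,
    ← ENNReal.ofReal_inv_of_pos hB,
    ← lintegral_mul_const _ (by fun_prop), ← lintegral_indicator measurableSet_Ioo]
  refine lintegral_congr fun x => ?_
  by_cases hx : x ∈ Ioo (0:ℝ) 1
  · simp only [Pi.mul_apply, indicator_of_mem hx]; ring
  · simp only [Pi.mul_apply, indicator_of_notMem hx, zero_mul]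

lemma subst_affine (d : ℝ) {c e : ℝ} (hc : 0 < c) (F : ℝ → ENNReal) :
    ∫⁻ x in Ioo d (d + c * e), F x = ∫⁻ y in Ioo (0:ℝ) e, ENNReal.ofReal c * F (d + c * y) := by
  have him : (fun y => d + c * y) '' Ioo (0:ℝ) e = Ioo d (d + c * e) := by
    ext x
    constructor
    · rintro ⟨y, ⟨h1, h2⟩, rfl⟩
      have := mul_pos hc h1
      have := mul_lt_mul_of_pos_left h2 hc
      constructor <;> simp only <;> linarith
    · rintro ⟨h1, h2⟩
      refine ⟨(x - d) / c, ⟨div_pos (by linarith) hc, ?_⟩, ?_⟩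
      · rw [div_lt_iff₀ hc]; linarith
      · field_simp; ring
  have h := lintegral_image_eq_lintegral_abs_deriv_mul (f := fun y => d + c * y) (f' := fun _ => c)
    (s := Ioo (0:ℝ) e) measurableSet_Ioo
    (fun x _ => by
      simpa using (((hasDerivAt_id x).const_mul c).const_add d).hasDerivWithinAt)
    (fun x _ y _ h => by
      have : d + c * x = d + c * y := h
      have := add_left_cancel this
      exact mul_left_cancel₀ hc.ne' this) F
  rw [him] at h
  rw [h]
  simp only [abs_of_pos hc]

lemma swap_tri (f : ℝ → ℝ → ENNReal) (hf : Measurable (Function.uncurry f)) :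
    ∫⁻ x in Ioo (0:ℝ) 1, ∫⁻ z in Ioo 0 x, f x z = ∫⁻ z in Ioo (0:ℝ) 1, ∫⁻ x in Ioo z 1, f x z := by
  have hT : MeasurableSet {p : ℝ × ℝ | 0 < p.2 ∧ p.2 < p.1 ∧ p.1 < 1} := by
    refine (measurableSet_lt measurable_const measurable_snd).inter
      ((measurableSet_lt measurable_snd measurable_fst).inter
        (measurableSet_lt measurable_fst measurable_const))
  have hm := hf.indicator hT
  have h1 : ∫⁻ x in Ioo (0:ℝ) 1, ∫⁻ z in Ioo 0 x, f x z
      = ∫⁻ x : ℝ, ∫⁻ z : ℝ, {p : ℝ × ℝ | 0 < p.2 ∧ p.2 < p.1 ∧ p.1 < 1}.indicator (Function.uncurry f) (x, z) := by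
    rw [← lintegral_indicator measurableSet_Ioo]
    refine lintegral_congr fun x => ?_
    by_cases hx : x ∈ Ioo (0:ℝ) 1
    · rw [indicator_of_mem hx, ← lintegral_indicator measurableSet_Ioo]
      refine lintegral_congr fun z => ?_
      have := hx.2
      simp [indicator_apply, this]
    · rw [indicator_of_notMem hx]
      symm
      rw [lintegral_eq_zero_iff' (by fun_prop)]
      refine Eventually.of_forall fun z => ?_
      refine indicator_of_notMem ?_ _
      rintro ⟨h1, h2, h3⟩
      exact hx ⟨h1.trans h2, h3⟩
  have h2 : ∫⁻ z in Ioo (0:ℝ) 1, ∫⁻ x in Ioo z 1, f x z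
      = ∫⁻ z : ℝ, ∫⁻ x : ℝ, {p : ℝ × ℝ | 0 < p.2 ∧ p.2 < p.1 ∧ p.1 < 1}.indicator (Function.uncurry f) (x, z) := by
    rw [← lintegral_indicator measurableSet_Ioo]
    refine lintegral_congr fun z => ?_
    by_cases hx : z ∈ Ioo (0:ℝ) 1
    · rw [indicator_of_mem hx, ← lintegral_indicator measurableSet_Ioo]
      refine lintegral_congr fun x => ?_
      have := hx.1
      simp [indicator_apply, this]
    · rw [indicator_of_notMem hx]
      symm
      rw [lintegral_eq_zero_iff' (by fun_prop)]
      refine Eventually.of_forall fun x => ?_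
      refine indicator_of_notMem ?_ _
      rintro ⟨h1, h2, h3⟩
      exact hx ⟨h1, h2.trans h3⟩
  rw [h1, h2]
  exact lintegral_lintegral_swap hm.aemeasurable

lemma U_rep {a a' b : ℝ} (ha : 0 < a) (ha' : 0 < a') (hb : 0 < b) {φ : ℝ → ENNReal} (hφ : Measurable φ) :
    ENNReal.ofReal (ProbabilityTheory.beta a a') * U a a' b φ =
      ∫⁻ z in Ioo (0:ℝ) 1, ∫⁻ y in Ioo (0:ℝ) 1, φ (z + (1 - z) * y) *
        ENNReal.ofReal ((z + (1 - z) * y) ^ (-a') * (z ^ (a - 1) * (1 - z) ^ (a' - 1)) *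
          (y ^ (a' - 1) * (1 - y) ^ (b - 1))) := by
  let f : ℝ → ℝ → ENNReal := fun x z => φ x * ENNReal.ofReal (x ^ (-a') * (1 - x) ^ (b - 1) * z ^ (a - 1)
    * (x - z) ^ (a' - 1) * (1 - z) ^ (-b))
  have hf : Measurable (Function.uncurry f) := by
    simp only [f, Function.uncurry_def]
    fun_prop
  have h1 : ENNReal.ofReal (ProbabilityTheory.beta a a') * U a a' b φ =
      ∫⁻ x in Ioo (0:ℝ) 1, ∫⁻ z in Ioo 0 x, f x z := by
    rw [U, ← lintegral_const_mul _ (by fun_prop)]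
    refine setLIntegral_congr_fun measurableSet_Ioo fun x hx => ?_
    have hx0 : 0 < x := hx.1
    have hx1 : 0 < 1 - x := by linarith [hx.2]
    have h2 := subst_affine 0 (e := 1) hx0 (f x)
    simp only [zero_add, mul_one] at h2
    beta_reduce
    rw [h2, mul_left_comm, mul_left_comm _ (ENNReal.ofReal (x ^ (a - 1) * (1 - x) ^ (b - 1))),
      euler ha ha' hb hx, ← lintegral_const_mul _ (by fun_prop), ← lintegral_const_mul _ (by fun_prop)]
    refine setLIntegral_congr_fun measurableSet_Ioo fun t ht => ?_
    have ht0 : 0 < t := ht.1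
    have ht1 : 0 < 1 - t := by linarith [ht.2]
    simp only [f]
    rw [mul_left_comm (ENNReal.ofReal x), ← ENNReal.ofReal_mul (by positivity),
      ← ENNReal.ofReal_mul hx0.le]
    congr 2
    have e1 : x - x * t = x * (1 - t) := by ring
    rw [e1, Real.mul_rpow hx0.le ht1.le, Real.mul_rpow hx0.le ht0.le, Real.rpow_sub_one hx0.ne' a',
      Real.rpow_neg hx0.le]
    have := Real.rpow_pos_of_pos hx0 a'
    field_simp
  rw [h1, swap_tri f hf]
  refine setLIntegral_congr_fun measurableSet_Ioo fun z hz => ?_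
  have hz0 : 0 < z := hz.1
  have hz1 : 0 < 1 - z := by linarith [hz.2]
  have h2 := subst_affine z (e := 1) hz1 (fun x => f x z)
  have e0 : z + (1 - z) * 1 = 1 := by ring
  rw [e0] at h2
  beta_reduce
  rw [h2]
  refine setLIntegral_congr_fun measurableSet_Ioo fun y hy => ?_
  have hy0 : 0 < y := hy.1
  have hy1 : 0 < 1 - y := by linarith [hy.2]
  simp only [f]
  rw [mul_left_comm, ← ENNReal.ofReal_mul hz1.le]
  congr 2
  have e1 : 1 - (z + (1 - z) * y) = (1 - z) * (1 - y) := by ring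
  have e2 : z + (1 - z) * y - z = (1 - z) * y := by ring
  rw [e1, e2, Real.mul_rpow hz1.le hy1.le, Real.mul_rpow hz1.le hy0.le, Real.rpow_sub_one hz1.ne' b,
    Real.rpow_neg hz1.le]
  have := Real.rpow_pos_of_pos hz1 b
  field_simp

lemma X_bound {a' z y : ℝ} (ha' : 0 < a') (hz : z ∈ Ioo (0:ℝ) 1) (hy : 0 ≤ y) :
    (z + (1 - z) * y) ^ (-a') ≤ z ^ (-a') := by
  have hz0 : 0 < z := hz.1
  have hz1 : 0 < 1 - z := by linarith [hz.2]
  have : 0 ≤ (1 - z) * y := by positivity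
  exact Real.rpow_le_rpow_of_nonpos hz0 (by linarith) (by linarith)

lemma z_comb {a a' z : ℝ} (hz : 0 < z) : z ^ (-a') * z ^ (a - 1) = z ^ (a - a' - 1) := by
  rw [← Real.rpow_add hz]; congr 1; ring

lemma U_one_fin {a a' b : ℝ} (ha' : 0 < a') (h : a' < a) (hb : 0 < b) :
    U a a' b (fun _ => 1) ≠ ⊤ := by
  have ha : 0 < a := ha'.trans h
  have hB := ProbabilityTheory.beta_pos ha ha'
  have h1 := U_rep ha ha' hb (φ := fun _ => 1) measurable_const
  have h2 : ENNReal.ofReal (ProbabilityTheory.beta a a') * U a a' b (fun _ => 1) ≤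
      ∫⁻ z in Ioo (0:ℝ) 1, ∫⁻ y in Ioo (0:ℝ) 1, ENNReal.ofReal (z ^ (a - a' - 1) * (1 - z) ^ (a' - 1)) *
        ENNReal.ofReal (y ^ (a' - 1) * (1 - y) ^ (b - 1)) := by
    rw [h1]
    refine setLIntegral_mono' measurableSet_Ioo fun z hz => ?_
    refine setLIntegral_mono' measurableSet_Ioo fun y hy => ?_
    have hz0 : 0 < z := hz.1
    have hz1 : 0 < 1 - z := by linarith [hz.2]
    have hy0 : 0 < y := hy.1
    have hy1 : 0 < 1 - y := by linarith [hy.2]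
    rw [one_mul, ← ENNReal.ofReal_mul (by positivity), ← z_comb hz0]
    refine ENNReal.ofReal_le_ofReal ?_
    have := X_bound ha' hz hy0.le
    rw [← mul_assoc (_ ^ (-a'))]
    gcongr
  have h3 : ∫⁻ z in Ioo (0:ℝ) 1, ∫⁻ y in Ioo (0:ℝ) 1, ENNReal.ofReal (z ^ (a - a' - 1) * (1 - z) ^ (a' - 1)) *
        ENNReal.ofReal (y ^ (a' - 1) * (1 - y) ^ (b - 1)) ≠ ⊤ := by
    simp_rw [lintegral_const_mul' _ _ ENNReal.ofReal_ne_top]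
    rw [lint_beta ha' hb, lintegral_mul_const' _ _ ENNReal.ofReal_ne_top, lint_beta (by linarith) ha']
    exact ENNReal.mul_ne_top ENNReal.ofReal_ne_top ENNReal.ofReal_ne_top
  intro htop
  rw [htop, ENNReal.mul_top (by simpa using hB)] at h2
  exact h3 (top_le_iff.1 h2)

lemma weak_of_nonneg {μ : ℝ → Measure ℝ} {ν : Measure ℝ} [IsProbabilityMeasure ν]
    (hμ : ∀ᶠ i in atTop, IsProbabilityMeasure (μ i))
    (H : ∀ (g : ℝ → ℝ) (C : ℝ), Continuous g → (∀ x, 0 ≤ g x) → (∀ x, g x ≤ C) →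
      Tendsto (fun i => ∫⁻ x, ENNReal.ofReal (g x) ∂(μ i)) atTop (𝓝 (∫⁻ x, ENNReal.ofReal (g x) ∂ν)))
    (f : BoundedContinuousFunction ℝ ℝ) :
    Tendsto (fun i => ∫ x, f x ∂(μ i)) atTop (𝓝 (∫ x, f x ∂ν)) := by
  have hb : ∀ x, |f x| ≤ ‖f‖ := fun x => f.norm_coe_le_norm x
  have key : ∀ (m : Measure ℝ) [IsProbabilityMeasure m],
      ∫ x, f x ∂m = (∫⁻ x, ENNReal.ofReal (f x + ‖f‖) ∂m).toReal - ‖f‖ := by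
    intro m _
    rw [← integral_eq_lintegral_of_nonneg_ae]
    · rw [integral_add (f.integrable m) (integrable_const _)]
      simp
    · exact Eventually.of_forall fun x => by have := abs_le.1 (hb x); simp only [Pi.zero_apply]; linarith
    · exact (f.continuous.add continuous_const).aestronglyMeasurable
  rw [key ν]
  have hT := H (fun x => f x + ‖f‖) (‖f‖ + ‖f‖) (f.continuous.add continuous_const)
    (fun x => by have := abs_le.1 (hb x); linarith) (fun x => by have := abs_le.1 (hb x); linarith)
  have hfin : ∫⁻ x, ENNReal.ofReal (f x + ‖f‖) ∂ν ≠ ⊤ :=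
    ((f.integrable ν).add (integrable_const _)).lintegral_lt_top.ne
  refine (((ENNReal.tendsto_toReal hfin).comp hT).sub_const ‖f‖).congr' ?_
  filter_upwards [hμ] with i hi
  rw [key (μ i)]
  rfl

lemma bh_prob {a a' b : ℝ} (ha : 0 < a) (ha' : 0 < a') (hb : 0 < b) (h : U a a' b (fun _ => 1) ≠ ⊤) :
    IsProbabilityMeasure (bhMeasure a a' b) := by
  constructor
  have h1 := bh_lint ha ha' hb h (φ := fun _ => 1) measurable_const
  rw [lintegral_one] at h1
  rw [h1, ENNReal.div_self (Cbh_eq ha ha' hb h).2.1 h]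

lemma beta1_prob {p q : ℝ} (hp : 0 < p) (hq : 0 < q) : IsProbabilityMeasure (beta1 p q) := by
  constructor
  have hB := ProbabilityTheory.beta_pos hp hq
  have h1 := beta1_lint hp hq (φ := fun _ => 1) measurable_const
  rw [lintegral_one] at h1
  simp_rw [one_mul] at h1
  rw [h1, lint_beta hp hq, ENNReal.div_self (by simpa using hB) ENNReal.ofReal_ne_top]

lemma E21_anti {a b c d x : ℝ} (ha : 0 < a) (hb : 0 < b) (hc : 0 < c) (hcd : c ≤ d) (hx : 0 < x) :
    E21 a b d x ≤ E21 a b c x := by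
  unfold E21
  refine ENNReal.tsum_le_tsum fun n => ENNReal.ofReal_le_ofReal ?_
  have := poch_pos ha n
  have := poch_pos hb n
  have := poch_pos hc n
  have := poch_mono hc hcd n
  unfold cf
  gcongr

lemma E21_lim {a b x : ℝ} (ha : 0 < a) (hb : 0 < b) (hx : x ∈ Ioo (0:ℝ) 1) :
    Tendsto (fun a' => E21 a b (a + a') x) atTop (𝓝 1) := by
  have hx0 : 0 < x := hx.1
  have h1 : Tendsto (fun a' => ∑' n : ℕ, cf a b (a + a') n * x ^ n) atTop
      (𝓝 (∑' n : ℕ, (0:ℝ) ^ n * (poch b n / n.factorial * x ^ n))) := by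
    refine tendsto_tsum_of_dominated_convergence
      (binom_hasSum b (y := x) (by rw [abs_of_pos hx.1]; exact hx.2)).summable (fun n => ?_) ?_
    · have h2 : Tendsto (fun a' : ℝ => ∏ i ∈ Finset.range n, (a + i) / (a + a' + i)) atTop
          (𝓝 (∏ i ∈ Finset.range n, (0:ℝ))) := by
        refine tendsto_finsetProd _ fun i _ => ?_
        refine Tendsto.div_atTop tendsto_const_nhds ?_
        exact tendsto_atTop_add_const_right _ _ (tendsto_atTop_add_const_left _ _ tendsto_id)
      rw [Finset.prod_const, Finset.card_range] at h2
      refine (h2.mul_const (poch b n / n.factorial * x ^ n)).congr fun a' => ?_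
      rw [Finset.prod_div_distrib, ← poch, ← poch, cf]
      ring
    · filter_upwards [eventually_gt_atTop 0] with a' ha' n
      have h3 := cf_nonneg ha hb (add_pos ha ha') n
      rw [Real.norm_of_nonneg (by positivity)]
      have := cf_le ha hb (c := a + a') (by linarith) n
      gcongr
  have h4 : ∑' n : ℕ, (0:ℝ) ^ n * (poch b n / n.factorial * x ^ n) = 1 := by
    rw [tsum_eq_single 0]
    · simp [poch]
    · intro n hn; simp [hn]
  rw [h4] at h1
  have h5 := (ENNReal.continuous_ofReal.tendsto 1).comp h1
  rw [ENNReal.ofReal_one] at h5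
  refine h5.congr' ?_
  filter_upwards [eventually_gt_atTop 0] with a' ha'
  rw [← E21_eq ha hb (by linarith) hx]
  rfl

lemma U_lim1 {a b : ℝ} (ha : 0 < a) (hb : 0 < b) {φ : ℝ → ENNReal} (hφ : Measurable φ) {C : ENNReal}
    (hC : C ≠ ⊤) (hφC : ∀ x, φ x ≤ C) :
    Tendsto (fun a' => U a a' b φ) atTop
      (𝓝 (∫⁻ x in Ioo (0:ℝ) 1, φ x * ENNReal.ofReal (x ^ (a - 1) * (1 - x) ^ (b - 1)))) := by
  have hfin := U_one_fin (a := a) (a' := a / 2) (by positivity) (by linarith) hb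
  refine tendsto_lintegral_filter_of_dominated_convergence
    (fun x => C * (1 * (ENNReal.ofReal (x ^ (a - 1) * (1 - x) ^ (b - 1)) * E21 a b (a + a / 2) x))) ?_ ?_ ?_ ?_
  · exact Eventually.of_forall fun a' => by fun_prop
  · filter_upwards [eventually_ge_atTop (a / 2)] with a' ha'
    refine ae_restrict_of_forall_mem measurableSet_Ioo fun x hx => ?_
    have := E21_anti (d := a + a') ha hb (c := a + a / 2) (by positivity) (by linarith) hx.1
    rw [one_mul]
    gcongr
    exact hφC x
  · rw [lintegral_const_mul' _ _ hC]
    exact ENNReal.mul_ne_top hC hfin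
  · refine ae_restrict_of_forall_mem measurableSet_Ioo fun x hx => ?_
    have h1 := E21_lim ha hb hx
    have h2 := ENNReal.Tendsto.const_mul h1
      (a := ENNReal.ofReal (x ^ (a - 1) * (1 - x) ^ (b - 1))) (Or.inr ENNReal.ofReal_ne_top)
    have h3 := ENNReal.Tendsto.const_mul h2 (a := φ x) (Or.inr ((hφC x).trans_lt hC.lt_top).ne)
    simpa using h3

lemma part1 {a b : ℝ} (ha : 0 < a) (hb : 0 < b) (f : BoundedContinuousFunction ℝ ℝ) :
    Tendsto (fun a' : ℝ => ∫ x, f x ∂(bhMeasure a a' b)) atTop (𝓝 (∫ x, f x ∂(beta1 a b))) := by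
  haveI := beta1_prob ha hb
  have hB := ProbabilityTheory.beta_pos ha hb
  have hfin : ∀ᶠ a' in atTop, 0 < a' ∧ U a a' b (fun _ => 1) ≠ ⊤ := by
    have hfin := U_one_fin (a := a) (a' := a / 2) (by positivity) (by linarith) hb
    filter_upwards [eventually_ge_atTop (a / 2)] with a' ha'
    refine ⟨by linarith, ne_top_of_le_ne_top hfin ?_⟩
    refine setLIntegral_mono' measurableSet_Ioo fun x hx => ?_
    have := E21_anti (d := a + a') ha hb (c := a + a / 2) (by positivity) (by linarith) hx.1
    gcongr
  refine weak_of_nonneg ?_ ?_ f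
  · filter_upwards [hfin] with a' h
    exact bh_prob ha h.1 hb h.2
  · intro g C hg hg0 hgC
    have hm : Measurable fun x => ENNReal.ofReal (g x) := by have := hg.measurable; fun_prop
    rw [beta1_lint ha hb hm]
    have h1 := U_lim1 ha hb hm (C := ENNReal.ofReal C) ENNReal.ofReal_ne_top
      (fun x => ENNReal.ofReal_le_ofReal (hgC x))
    have h2 := U_lim1 ha hb (φ := fun _ => 1) measurable_const (C := 1) ENNReal.one_ne_top
      (fun x => le_rfl)
    simp_rw [one_mul] at h2
    rw [lint_beta ha hb] at h2
    refine (ENNReal.Tendsto.div h1 (Or.inr (by simpa using hB)) h2 (Or.inl ENNReal.ofReal_ne_top)).congr' ?_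
    filter_upwards [hfin] with a' h
    rw [bh_lint ha h.1 hb h.2 hm]

/-- rescaled integrand -/
noncomputable def PP (a a' : ℝ) (g : ℝ → ℝ) (b z u : ℝ) : ENNReal :=
  ENNReal.ofReal (if u < b then g (z + (1 - z) * (u / b)) * (z + (1 - z) * (u / b)) ^ (-a') *
    (z ^ (a - 1) * (1 - z) ^ (a' - 1)) * (u ^ (a' - 1) * (1 - u / b) ^ (b - 1)) else 0)

lemma PP_meas (a a' : ℝ) {g : ℝ → ℝ} (hg : Continuous g) (b : ℝ) :
    Measurable (fun p : ℝ × ℝ => PP a a' g b p.1 p.2) := by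
  unfold PP
  have := hg.measurable
  refine ENNReal.measurable_ofReal.comp (Measurable.ite (measurableSet_lt measurable_snd measurable_const) ?_ ?_)
  · fun_prop
  · fun_prop

lemma U_PP {a a' b : ℝ} (ha : 0 < a) (ha' : 0 < a') (hb : 0 < b) {g : ℝ → ℝ} (hg : Continuous g)
    (hg0 : ∀ x, 0 ≤ g x) :
    ENNReal.ofReal (b ^ a') * (ENNReal.ofReal (ProbabilityTheory.beta a a') *
      U a a' b (fun x => ENNReal.ofReal (g x))) =
      ∫⁻ z in Ioo (0:ℝ) 1, ∫⁻ u in Ioi (0:ℝ), PP a a' g b z u := by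
  have hm : Measurable fun x => ENNReal.ofReal (g x) := by have := hg.measurable; fun_prop
  rw [U_rep ha ha' hb hm, ← lintegral_const_mul' _ _ ENNReal.ofReal_ne_top]
  refine setLIntegral_congr_fun measurableSet_Ioo fun z hz => ?_
  have hz0 : 0 < z := hz.1
  have hz1 : 0 < 1 - z := by linarith [hz.2]
  beta_reduce
  rw [← lintegral_const_mul' _ _ ENNReal.ofReal_ne_top]
  have h2 := subst_affine 0 (c := 1 / b) (e := b) (by positivity) (fun y => ENNReal.ofReal (b ^ a') *
    (ENNReal.ofReal (g (z + (1 - z) * y)) * ENNReal.ofReal ((z + (1 - z) * y) ^ (-a') *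
      (z ^ (a - 1) * (1 - z) ^ (a' - 1)) * (y ^ (a' - 1) * (1 - y) ^ (b - 1)))))
  have e0 : (0:ℝ) + 1 / b * b = 1 := by field_simp; simp
  rw [e0] at h2
  rw [h2, ← lintegral_indicator measurableSet_Ioo, ← lintegral_indicator measurableSet_Ioi]
  refine lintegral_congr fun u => ?_
  by_cases hu : 0 < u
  · rw [indicator_of_mem (show u ∈ Ioi 0 from hu)]
    by_cases hub : u < b
    · rw [indicator_of_mem (show u ∈ Ioo 0 b from ⟨hu, hub⟩), PP, if_pos hub]
      have e1 : 0 + 1 / b * u = u / b := by field_simp; simp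
      rw [e1]
      have h3 : u / b < 1 := by rw [div_lt_one hb]; exact hub
      have h4 : 0 < 1 - u / b := by linarith
      have h5 : 0 < u / b := by positivity
      have h6 := hg0 (z + (1 - z) * (u / b))
      rw [← ENNReal.ofReal_mul h6, ← ENNReal.ofReal_mul (by positivity), ← ENNReal.ofReal_mul (by positivity)]
      congr 1
      rw [Real.div_rpow hu.le hb.le, Real.rpow_sub_one hb.ne' a']
      have := Real.rpow_pos_of_pos hb a'
      field_simp
    · rw [indicator_of_notMem (fun h => hub h.2), PP, if_neg hub, ENNReal.ofReal_zero]
  · rw [indicator_of_notMem (fun h => hu h.1), indicator_of_notMem (show u ∉ Ioi 0 from hu)]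

lemma PP_bound {a a' b z u : ℝ} (ha' : 0 < a') (hb : 2 ≤ b) {g : ℝ → ℝ} {C : ℝ}
    (hg0 : ∀ x, 0 ≤ g x) (hgC : ∀ x, g x ≤ C) (hz : z ∈ Ioo (0:ℝ) 1) (hu : 0 < u) :
    PP a a' g b z u ≤ ENNReal.ofReal (C * (z ^ (a - a' - 1) * (1 - z) ^ (a' - 1))) *
      ENNReal.ofReal (u ^ (a' - 1) * Real.exp (-(1 / 2) * u ^ (1:ℝ))) := by
  have hz0 : 0 < z := hz.1
  have hz1 : 0 < 1 - z := by linarith [hz.2]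
  have hb0 : 0 < b := by linarith
  have hC : 0 ≤ C := (hg0 0).trans (hgC 0)
  rw [← ENNReal.ofReal_mul (by positivity), PP, Real.rpow_one]
  refine ENNReal.ofReal_le_ofReal ?_
  split_ifs with hub
  · have h3 : u / b < 1 := by rw [div_lt_one hb0]; exact hub
    have h4 : 0 < 1 - u / b := by linarith
    have h5 : 0 < u / b := by positivity
    have h6 := X_bound ha' hz h5.le
    have h7 : (1 - u / b) ^ (b - 1) ≤ Real.exp (-(1 / 2) * u) := by
      calc (1 - u / b) ^ (b - 1) ≤ (Real.exp (-(u / b))) ^ (b - 1) := by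
            refine Real.rpow_le_rpow h4.le ?_ (by linarith)
            have := Real.add_one_le_exp (-(u / b)); linarith
        _ = Real.exp (-(u / b) * (b - 1)) := by rw [← Real.exp_mul]
        _ ≤ _ := by
            refine Real.exp_le_exp.2 ?_
            have : u / b * (b - 1) = u * ((b - 1) / b) := by ring
            have h8 : 1 / 2 ≤ (b - 1) / b := by rw [div_le_div_iff₀ (by norm_num) hb0]; linarith
            have := mul_le_mul_of_nonneg_left h8 hu.le
            linarith
    rw [← z_comb hz0]
    have h9 := hg0 (z + (1 - z) * (u / b))
    have h10 := hgC (z + (1 - z) * (u / b))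
    calc _ ≤ C * z ^ (-a') * (z ^ (a - 1) * (1 - z) ^ (a' - 1)) * (u ^ (a' - 1) * Real.exp (-(1 / 2) * u)) := by
          gcongr
      _ = _ := by ring
  · positivity

lemma PP_lim {a a' z u : ℝ} {g : ℝ → ℝ} (hg : Continuous g)
    (hg0 : ∀ x, 0 ≤ g x) (hz : z ∈ Ioo (0:ℝ) 1) (hu : 0 < u) :
    Tendsto (fun b => PP a a' g b z u) atTop (𝓝 (ENNReal.ofReal (g z * (z ^ (a - a' - 1) * (1 - z) ^ (a' - 1))) *
      ENNReal.ofReal (Real.exp (-u) * u ^ (a' - 1)))) := by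
  have hz0 : 0 < z := hz.1
  have hz1 : 0 < 1 - z := by linarith [hz.2]
  have hgz := hg0 z
  rw [← ENNReal.ofReal_mul (by positivity)]
  have hub : Tendsto (fun b : ℝ => u / b) atTop (𝓝 0) := tendsto_const_nhds.div_atTop tendsto_id
  have hX : Tendsto (fun b : ℝ => z + (1 - z) * (u / b)) atTop (𝓝 z) := by
    simpa using (hub.const_mul (1 - z)).const_add z
  have h1 : Tendsto (fun b : ℝ => (1 - u / b) ^ (b - 1)) atTop (𝓝 (Real.exp (-u))) := by
    have h2 := Real.tendsto_one_add_div_rpow_exp (-u)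
    have h3 : Tendsto (fun b : ℝ => 1 - u / b) atTop (𝓝 1) := by simpa using hub.const_sub 1
    have h4 := h2.div h3 one_ne_zero
    rw [div_one] at h4
    refine h4.congr' ?_
    filter_upwards [eventually_gt_atTop u] with b hb
    have h5 : u / b < 1 := by rw [div_lt_one (by linarith)]; exact hb
    have h6 : 0 < 1 - u / b := by linarith
    have e : 1 + -u / b = 1 - u / b := by ring
    simp only [Pi.div_apply]
    rw [Real.rpow_sub_one h6.ne', e]
  have h2 := (((hg.tendsto z).comp hX).mul (hX.rpow_const (p := -a') (Or.inl hz0.ne'))).mul_const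
    (z ^ (a - 1) * (1 - z) ^ (a' - 1))
  have h3 := h2.mul (h1.const_mul (u ^ (a' - 1)))
  have e : g z * z ^ (-a') * (z ^ (a - 1) * (1 - z) ^ (a' - 1)) * (u ^ (a' - 1) * Real.exp (-u))
      = g z * (z ^ (a - a' - 1) * (1 - z) ^ (a' - 1)) * (Real.exp (-u) * u ^ (a' - 1)) := by
    rw [← z_comb hz0]; ring
  rw [e] at h3
  refine ((ENNReal.continuous_ofReal.tendsto _).comp h3).congr' ?_
  filter_upwards [eventually_gt_atTop u] with b hb
  rw [PP, if_pos hb]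
  rfl

lemma K_fin {s c : ℝ} (hs : 0 < s) (hc : 0 < c) :
    ∫⁻ u in Ioi (0:ℝ), ENNReal.ofReal (u ^ (s - 1) * Real.exp (-c * u ^ (1:ℝ))) ≠ ⊤ :=
  (integrableOn_rpow_mul_exp_neg_mul_rpow (p := 1) (s := s - 1) (by linarith) one_pos hc).lintegral_lt_top.ne

lemma K_eq {s : ℝ} (hs : 0 < s) :
    ∫⁻ u in Ioi (0:ℝ), ENNReal.ofReal (Real.exp (-u) * u ^ (s - 1)) = ENNReal.ofReal (Real.Gamma s) := by
  rw [Real.Gamma_eq_integral hs, ofReal_integral_eq_lintegral_ofReal (Real.GammaIntegral_convergent hs)]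
  refine ae_restrict_of_forall_mem measurableSet_Ioi fun u hu => ?_
  have : (0:ℝ) < u := hu
  simp only [Pi.zero_apply]
  positivity

lemma U_lim2 {a a' : ℝ} (ha' : 0 < a') (h : a' < a) {g : ℝ → ℝ} {C : ℝ} (hg : Continuous g)
    (hg0 : ∀ x, 0 ≤ g x) (hgC : ∀ x, g x ≤ C) :
    Tendsto (fun b => ENNReal.ofReal (b ^ a') * (ENNReal.ofReal (ProbabilityTheory.beta a a') *
      U a a' b (fun x => ENNReal.ofReal (g x)))) atTop
      (𝓝 ((∫⁻ z in Ioo (0:ℝ) 1, ENNReal.ofReal (g z) * ENNReal.ofReal (z ^ (a - a' - 1) * (1 - z) ^ (a' - 1)))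
        * ENNReal.ofReal (Real.Gamma a'))) := by
  have ha : 0 < a := ha'.trans h
  have hC : 0 ≤ C := (hg0 0).trans (hgC 0)
  have hK := K_fin (c := 1 / 2) ha' (by norm_num)
  have main : Tendsto (fun b => ∫⁻ z in Ioo (0:ℝ) 1, ∫⁻ u in Ioi (0:ℝ), PP a a' g b z u) atTop
      (𝓝 (∫⁻ z in Ioo (0:ℝ) 1, ∫⁻ u in Ioi (0:ℝ),
        ENNReal.ofReal (g z * (z ^ (a - a' - 1) * (1 - z) ^ (a' - 1))) *
          ENNReal.ofReal (Real.exp (-u) * u ^ (a' - 1)))) := by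
    refine tendsto_lintegral_filter_of_dominated_convergence
      (fun z => ∫⁻ u in Ioi (0:ℝ), ENNReal.ofReal (C * (z ^ (a - a' - 1) * (1 - z) ^ (a' - 1))) *
        ENNReal.ofReal (u ^ (a' - 1) * Real.exp (-(1 / 2) * u ^ (1:ℝ)))) ?_ ?_ ?_ ?_
    · exact Eventually.of_forall fun b => (PP_meas a a' hg b).lintegral_prod_right'
    · filter_upwards [eventually_ge_atTop 2] with b hb
      refine ae_restrict_of_forall_mem measurableSet_Ioo fun z hz => ?_
      exact setLIntegral_mono' measurableSet_Ioi fun u hu => PP_bound ha' hb hg0 hgC hz hu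
    · simp_rw [lintegral_const_mul' _ _ ENNReal.ofReal_ne_top]
      rw [lintegral_mul_const' _ _ hK]
      simp_rw [ENNReal.ofReal_mul hC]
      rw [lintegral_const_mul' _ _ ENNReal.ofReal_ne_top, lint_beta (by linarith) ha']
      exact ENNReal.mul_ne_top (ENNReal.mul_ne_top ENNReal.ofReal_ne_top ENNReal.ofReal_ne_top) hK
    · refine ae_restrict_of_forall_mem measurableSet_Ioo fun z hz => ?_
      refine tendsto_lintegral_filter_of_dominated_convergence
        (fun u => ENNReal.ofReal (C * (z ^ (a - a' - 1) * (1 - z) ^ (a' - 1))) *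
          ENNReal.ofReal (u ^ (a' - 1) * Real.exp (-(1 / 2) * u ^ (1:ℝ)))) ?_ ?_ ?_ ?_
      · exact Eventually.of_forall fun b => (PP_meas a a' hg b).comp measurable_prodMk_left
      · filter_upwards [eventually_ge_atTop 2] with b hb
        exact ae_restrict_of_forall_mem measurableSet_Ioi fun u hu => PP_bound ha' hb hg0 hgC hz hu
      · rw [lintegral_const_mul' _ _ ENNReal.ofReal_ne_top]
        exact ENNReal.mul_ne_top ENNReal.ofReal_ne_top hK
      · exact ae_restrict_of_forall_mem measurableSet_Ioi fun u hu => PP_lim hg hg0 hz hu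
  simp_rw [lintegral_const_mul' _ _ ENNReal.ofReal_ne_top] at main
  rw [K_eq ha', lintegral_mul_const' _ _ ENNReal.ofReal_ne_top] at main
  simp_rw [ENNReal.ofReal_mul (hg0 _)] at main
  refine main.congr' ?_
  filter_upwards [eventually_gt_atTop 0] with b hb
  rw [U_PP ha ha' hb hg hg0]

lemma part2 {a a' : ℝ} (ha' : 0 < a') (h : a' < a) (f : BoundedContinuousFunction ℝ ℝ) :
    Tendsto (fun b : ℝ => ∫ x, f x ∂(bhMeasure a a' b)) atTop (𝓝 (∫ x, f x ∂(beta1 (a - a') a'))) := by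
  have ha : 0 < a := ha'.trans h
  have hp : 0 < a - a' := by linarith
  have := beta1_prob hp ha'
  have hB := ProbabilityTheory.beta_pos hp ha'
  have hB2 := ProbabilityTheory.beta_pos ha ha'
  have hG := Real.Gamma_pos_of_pos ha'
  refine weak_of_nonneg ?_ ?_ f
  · filter_upwards [eventually_gt_atTop 0] with b hb
    exact bh_prob ha ha' hb (U_one_fin ha' h hb)
  · intro g C hg hg0 hgC
    have hm : Measurable fun x => ENNReal.ofReal (g x) := by have := hg.measurable; fun_prop
    rw [beta1_lint hp ha' hm]
    have h1 := U_lim2 ha' h hg hg0 hgC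
    have h2 := U_lim2 ha' h (g := fun _ => 1) (C := 1) continuous_const
      (fun _ => zero_le_one) (fun x => le_rfl)
    simp_rw [ENNReal.ofReal_one, one_mul] at h2
    rw [lint_beta hp ha'] at h2
    have h3 := ENNReal.Tendsto.div h1 (Or.inr (mul_ne_zero (by simpa using hB) (by simpa using hG))) h2
      (Or.inl (ENNReal.mul_ne_top ENNReal.ofReal_ne_top ENNReal.ofReal_ne_top))
    rw [ENNReal.mul_div_mul_right _ _ (by simpa using hG) ENNReal.ofReal_ne_top] at h3
    refine h3.congr' ?_
    filter_upwards [eventually_gt_atTop 0] with b hb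
    have hbp := Real.rpow_pos_of_pos hb a'
    rw [bh_lint ha ha' hb (U_one_fin ha' h hb) hm,
      ENNReal.mul_div_mul_left _ _ (by simpa using hbp) ENNReal.ofReal_ne_top,
      ENNReal.mul_div_mul_left _ _ (by simpa using hB2) ENNReal.ofReal_ne_top]

theorem bh_weak_limits (a : ℝ) (ha : 0 < a) :
    (∀ b : ℝ, 0 < b → ∀ f : BoundedContinuousFunction ℝ ℝ,
        Filter.Tendsto (fun a' : ℝ => ∫ x, f x ∂(bhMeasure a a' b)) Filter.atTop
          (nhds (∫ x, f x ∂(beta1 a b)))) ∧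
    (∀ a' : ℝ, 0 < a' → a' < a → ∀ f : BoundedContinuousFunction ℝ ℝ,
        Filter.Tendsto (fun b : ℝ => ∫ x, f x ∂(bhMeasure a a' b)) Filter.atTop
          (nhds (∫ x, f x ∂(beta1 (a - a') a')))) := by
  exact ⟨fun b hb f => part1 ha hb f, fun a' ha' h f => part2 ha' h f⟩
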